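/- Let X be a finite set, μ a probability measure on X, f : X → ℝ_{≥0} with f̄ = Σ_{x∈X} μ(x)·f(x) > 0, and s : X → ℝ_{>0} with s(x) ≥ f(x)/f̄ for every x with μ(x) > 0. Put S = Σ_x μ(x)·s(x) and q(x) = s(x)·μ(x)/S. Let ε > 0 and let a be an integer with a ≥ max(1, 2(S−1)/ε²). If x_1,…,x_a are drawn independently according to q, then Pr[ | f̄ − Σ_{t=1}^a (S/(a·s(x_t)))·f(x_t) | ≥ ε·f̄ ] ≤ 1/2. -/

import Mathlib

open scoped Classical

/-! The estimator `Z = S * f / s` has mean `f̄` under `q`, and the sensitivity bound confines it to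
`[0, S * f̄]`. The Bhatia–Davis inequality `Var Z ≤ (b - E Z) * (E Z - a)`, for `Z` with values in
`[a, b]`, then gives `Var Z ≤ (S - 1) * f̄ ^ 2`, and Chebyshev's inequality for the mean of
independent copies of `Z` bounds the deviation probability by `(S - 1) / (a * ε ^ 2)`. -/

section SampleMean

open MeasureTheory ProbabilityTheory

variable {Ω ι : Type*} [MeasurableSpace Ω] [Fintype ι] {P : Measure Ω} [IsProbabilityMeasure P]
  {Z : Ω → ℝ}

theorem integral_sum_div_card_pi [Nonempty ι] (hZ : Integrable Z P) :
    ∫ ω : ι → Ω, (∑ t, Z (ω t)) / Fintype.card ι ∂Measure.pi (fun _ => P) = ∫ x, Z x ∂P := by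
  have hcard : (Fintype.card ι : ℝ) ≠ 0 := Nat.cast_ne_zero.mpr Fintype.card_ne_zero
  rw [integral_div, integral_finsetSum _ fun t _ => integrable_comp_eval hZ]
  simp only [integral_comp_eval (μ := fun _ : ι => P) hZ.aestronglyMeasurable, Finset.sum_const,
    Finset.card_univ, nsmul_eq_mul]
  exact mul_div_cancel_left₀ _ hcard

theorem variance_sum_div_card_pi [Nonempty ι] (hZ : MemLp Z 2 P) :
    Var[fun ω : ι → Ω => (∑ t, Z (ω t)) / Fintype.card ι; Measure.pi (fun _ => P)] =
      Var[Z; P] / Fintype.card ι := by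
  have hsum : Var[fun ω : ι → Ω => ∑ t, Z (ω t); Measure.pi (fun _ => P)] =
      Fintype.card ι * Var[Z; P] := by
    simpa only [Finset.sum_fn, Finset.sum_const, Finset.card_univ, nsmul_eq_mul] using
      variance_sum_pi (X := fun _ : ι => Z) (fun _ => hZ)
  simp only [div_eq_inv_mul, variance_const_mul, hsum]
  field_simp

theorem measureReal_pi_le_abs_integral_sub_sum_div_card_le [Nonempty ι] (hZ : MemLp Z 2 P) {c : ℝ}
    (hc : 0 < c) :
    (Measure.pi fun _ : ι => P).real
        {ω | c ≤ |∫ x, Z x ∂P - (∑ t, Z (ω t)) / Fintype.card ι|} ≤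
      Var[Z; P] / (Fintype.card ι * c ^ 2) := by
  have hmean : MemLp (fun ω : ι → Ω => (∑ t, Z (ω t)) / Fintype.card ι) 2
      (Measure.pi fun _ => P) := by
    simp only [div_eq_inv_mul]
    exact (memLp_finsetSum _ fun t _ =>
      hZ.comp_measurePreserving (measurePreserving_eval (fun _ => P) t)).const_mul _
  have hcheb := ENNReal.toReal_le_of_le_ofReal
    (div_nonneg (variance_nonneg _ _) (sq_nonneg c)) (meas_ge_le_variance_div_sq hmean hc)
  rw [integral_sum_div_card_pi (hZ.integrable one_le_two), variance_sum_div_card_pi hZ,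
    div_div] at hcheb
  simpa only [abs_sub_comm, measureReal_def] using hcheb

end SampleMean

section ImportanceSampling

open MeasureTheory ProbabilityTheory

variable {X ι : Type*} [MeasurableSpace X] [Fintype ι] {μ : Measure X} {f s : X → ℝ} {ε : ℝ}

/-- The importance-sampling distribution `q`, with density `s / S` with respect to `μ`, where
`S = ∫ s dμ`. -/
noncomputable def importanceMeasure (μ : Measure X) (s : X → ℝ) : Measure X :=
  μ.withDensity fun x => ENNReal.ofReal (s x / ∫ y, s y ∂μ)

/-- The single-draw estimator `S * f / s` of `∫ f dμ`, to be evaluated at a point drawn from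
`importanceMeasure μ s`. -/
noncomputable def importanceEstimator (μ : Measure X) (f s : X → ℝ) (x : X) : ℝ :=
  (∫ y, s y ∂μ) / s x * f x

theorem importanceMeasure_absolutelyContinuous (μ : Measure X) (s : X → ℝ) :
    importanceMeasure μ s ≪ μ :=
  withDensity_absolutelyContinuous _ _

theorem isProbabilityMeasure_importanceMeasure (hs0 : 0 ≤ᵐ[μ] s) (hS : 0 < ∫ x, s x ∂μ) :
    IsProbabilityMeasure (importanceMeasure μ s) := by
  have hs : Integrable s μ := .of_integral_ne_zero hS.ne'
  have hdensity : 0 ≤ᵐ[μ] fun x => s x / ∫ y, s y ∂μ := by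
    filter_upwards [hs0] with x hx using div_nonneg hx hS.le
  constructor
  rw [importanceMeasure, withDensity_apply _ MeasurableSet.univ, Measure.restrict_univ,
    ← ofReal_integral_eq_lintegral_ofReal (hs.div_const _) hdensity, integral_div,
    div_self hS.ne', ENNReal.ofReal_one]

theorem integral_importanceEstimator (hs0 : 0 ≤ᵐ[μ] s) (hS : 0 < ∫ x, s x ∂μ)
    (hfs : ∀ᵐ x ∂μ, s x = 0 → f x = 0) :
    ∫ x, importanceEstimator μ f s x ∂importanceMeasure μ s = ∫ x, f x ∂μ := by
  have hs : Integrable s μ := .of_integral_ne_zero hS.ne'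
  rw [importanceMeasure, integral_withDensity_eq_integral_toReal_smul₀
    (hs.div_const _).aemeasurable.ennreal_ofReal (ae_of_all _ fun _ => ENNReal.ofReal_lt_top)]
  refine integral_congr_ae ?_
  filter_upwards [hs0, hfs] with x hsx hfsx
  rw [ENNReal.toReal_ofReal (div_nonneg hsx hS.le), smul_eq_mul, importanceEstimator]
  rcases eq_or_ne (s x) 0 with h | h
  · simp [h, hfsx h]
  · field_simp

theorem aemeasurable_importanceEstimator (hf : AEMeasurable f μ) (hs : AEMeasurable s μ) :
    AEMeasurable (importanceEstimator μ f s) (importanceMeasure μ s) :=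
  ((hs.const_div _).mul hf).mono_ac (importanceMeasure_absolutelyContinuous μ s)

/-- `s` bounds the sensitivity `f / f̄` of `f`, where `f̄ = ∫ f dμ`. The bound holds `μ`-almost
everywhere, which for weights on a finite set means at the points of positive weight. -/
def IsSensitivityBound (μ : Measure X) (f s : X → ℝ) : Prop :=
  ∀ᵐ x ∂μ, f x / ∫ y, f y ∂μ ≤ s x

namespace IsSensitivityBound

theorem ae_nonneg (h : IsSensitivityBound μ f s) (hf0 : 0 ≤ᵐ[μ] f) : 0 ≤ᵐ[μ] s := by
  filter_upwards [hf0, h] with x hfx hx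
  exact (div_nonneg hfx (integral_nonneg_of_ae hf0)).trans hx

theorem one_le_integral (h : IsSensitivityBound μ f s) (hf : 0 < ∫ x, f x ∂μ)
    (hs : Integrable s μ) : 1 ≤ ∫ x, s x ∂μ :=
  calc 1 = ∫ x, f x / ∫ y, f y ∂μ ∂μ := by rw [integral_div, div_self hf.ne']
    _ ≤ ∫ x, s x ∂μ :=
      integral_mono_ae ((Integrable.of_integral_ne_zero hf.ne').div_const _) hs h

protected theorem isProbabilityMeasure_importanceMeasure (h : IsSensitivityBound μ f s)
    (hf0 : 0 ≤ᵐ[μ] f) (hf : 0 < ∫ x, f x ∂μ) (hs : Integrable s μ) :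
    IsProbabilityMeasure (importanceMeasure μ s) :=
  isProbabilityMeasure_importanceMeasure (h.ae_nonneg hf0)
    (zero_lt_one.trans_le (h.one_le_integral hf hs))

protected theorem integral_importanceEstimator (h : IsSensitivityBound μ f s) (hf0 : 0 ≤ᵐ[μ] f)
    (hf : 0 < ∫ x, f x ∂μ) (hs : Integrable s μ) :
    ∫ x, importanceEstimator μ f s x ∂importanceMeasure μ s = ∫ x, f x ∂μ := by
  refine integral_importanceEstimator (h.ae_nonneg hf0)
    (zero_lt_one.trans_le (h.one_le_integral hf hs)) ?_
  filter_upwards [hf0, h] with x hfx hx hsx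
  rw [hsx, div_le_iff₀ hf, zero_mul] at hx
  exact le_antisymm hx hfx

theorem importanceEstimator_mem_Icc (h : IsSensitivityBound μ f s) (hf0 : 0 ≤ᵐ[μ] f)
    (hf : 0 < ∫ x, f x ∂μ) :
    ∀ᵐ x ∂importanceMeasure μ s,
      importanceEstimator μ f s x ∈ Set.Icc 0 ((∫ y, s y ∂μ) * ∫ y, f y ∂μ) := by
  refine (importanceMeasure_absolutelyContinuous μ s).ae_le ?_
  have hs0 := h.ae_nonneg hf0
  have hS : 0 ≤ ∫ x, s x ∂μ := integral_nonneg_of_ae hs0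
  filter_upwards [hf0, hs0, h] with x hfx hsx hx
  rw [importanceEstimator, div_mul_eq_mul_div, mul_div_assoc]
  exact ⟨mul_nonneg hS (div_nonneg hfx hsx),
    mul_le_mul_of_nonneg_left (div_le_of_le_mul₀ hsx hf.le ((div_le_iff₀' hf).mp hx)) hS⟩

theorem variance_importanceEstimator_le (h : IsSensitivityBound μ f s) (hf0 : 0 ≤ᵐ[μ] f)
    (hf : 0 < ∫ x, f x ∂μ) (hs : Integrable s μ) :
    Var[importanceEstimator μ f s; importanceMeasure μ s] ≤
      ((∫ x, s x ∂μ) - 1) * (∫ x, f x ∂μ) ^ 2 := by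
  have := h.isProbabilityMeasure_importanceMeasure hf0 hf hs
  have bhatia_davis := variance_le_sub_mul_sub (h.importanceEstimator_mem_Icc hf0 hf)
    (aemeasurable_importanceEstimator (Integrable.of_integral_ne_zero hf.ne').aemeasurable
      hs.aemeasurable)
  rw [h.integral_importanceEstimator hf0 hf hs] at bhatia_davis
  exact bhatia_davis.trans_eq (by ring)

theorem measureReal_pi_importanceMeasure_le [Nonempty ι] (h : IsSensitivityBound μ f s)
    (hf0 : 0 ≤ᵐ[μ] f) (hf : 0 < ∫ x, f x ∂μ) (hs : Integrable s μ) (hε : 0 < ε) :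
    (Measure.pi fun _ : ι => importanceMeasure μ s).real
        {ω | ε * ∫ x, f x ∂μ ≤
          |∫ x, f x ∂μ - (∑ t, importanceEstimator μ f s (ω t)) / Fintype.card ι|} ≤
      ((∫ x, s x ∂μ) - 1) / (Fintype.card ι * ε ^ 2) := by
  have := h.isProbabilityMeasure_importanceMeasure hf0 hf hs
  have hmem : MemLp (importanceEstimator μ f s) 2 (importanceMeasure μ s) :=
    memLp_of_bounded (h.importanceEstimator_mem_Icc hf0 hf)
      (aemeasurable_importanceEstimator (Integrable.of_integral_ne_zero hf.ne').aemeasurable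
        hs.aemeasurable).aestronglyMeasurable 2
  have chebyshev :=
    measureReal_pi_le_abs_integral_sub_sum_div_card_le (ι := ι) hmem (mul_pos hε hf)
  rw [h.integral_importanceEstimator hf0 hf hs] at chebyshev
  calc _ ≤ Var[importanceEstimator μ f s; importanceMeasure μ s] /
        (Fintype.card ι * (ε * ∫ x, f x ∂μ) ^ 2) := chebyshev
    _ ≤ ((∫ x, s x ∂μ) - 1) * (∫ x, f x ∂μ) ^ 2 /
        (Fintype.card ι * (ε * ∫ x, f x ∂μ) ^ 2) := by
      gcongr
      exact h.variance_importanceEstimator_le hf0 hf hs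
    _ = ((∫ x, s x ∂μ) - 1) / (Fintype.card ι * ε ^ 2) := by field_simp

end IsSensitivityBound

theorem importance_sampling_concentration_general (hf0 : 0 ≤ᵐ[μ] f) (hf : 0 < ∫ x, f x ∂μ)
    (hs : Integrable s μ) (hfs : IsSensitivityBound μ f s) (hε : 0 < ε) {a : ℕ}
    (ha1 : 1 ≤ a) (ha : 2 * ((∫ x, s x ∂μ) - 1) / ε ^ 2 ≤ a) :
    (Measure.pi fun _ : Fin a => importanceMeasure μ s).real
        {ω | ε * ∫ x, f x ∂μ ≤
          |∫ x, f x ∂μ - ∑ t, (∫ x, s x ∂μ) / (a * s (ω t)) * f (ω t)|} ≤ 1 / 2 := by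
  have : NeZero a := ⟨Nat.one_le_iff_ne_zero.mp ha1⟩
  have hsum (ω : Fin a → X) : ∑ t, (∫ x, s x ∂μ) / (a * s (ω t)) * f (ω t) =
      (∑ t, importanceEstimator μ f s (ω t)) / a := by
    rw [Finset.sum_div]
    exact Finset.sum_congr rfl fun t _ => by rw [importanceEstimator]; ring
  have htail := hfs.measureReal_pi_importanceMeasure_le (ι := Fin a) hf0 hf hs hε
  simp only [Fintype.card_fin, ← hsum] at htail
  refine htail.trans ?_
  have ha0 : (0 : ℝ) < a := Nat.cast_pos.mpr ha1
  rw [div_le_iff₀ (by positivity)] at ha ⊢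
  linarith

end ImportanceSampling

section FiniteSpace

open MeasureTheory

/-- The measure on a discrete space giving mass `w x` to the point `x` (negative weights count as
zero). -/
noncomputable def measureOfWeights {X : Type*} [MeasurableSpace X] (w : X → ℝ) : Measure X :=
  Measure.count.withDensity fun x => ENNReal.ofReal (w x)

variable {X : Type*} [MeasurableSpace X]

theorem measureReal_withDensity_ofReal_singleton [MeasurableSingletonClass X] (ν : Measure X)
    (g : X → ℝ) {x : X} (hg : 0 ≤ g x) :
    (ν.withDensity fun y => ENNReal.ofReal (g y)).real {x} = g x * ν.real {x} := by
  rw [measureReal_def, withDensity_apply _ (measurableSet_singleton x), lintegral_singleton,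
    ENNReal.toReal_mul, ENNReal.toReal_ofReal hg, measureReal_def]

theorem measureReal_pi_setOf_eq_sum_prod {ι : Type*} [Fintype ι] [DecidableEq ι] {Y : ι → Type*}
    [∀ t, Fintype (Y t)] [∀ t, MeasurableSpace (Y t)] [∀ t, MeasurableSingletonClass (Y t)]
    (ν : ∀ t, Measure (Y t)) [∀ t, SigmaFinite (ν t)] (p : (∀ t, Y t) → Prop) [DecidablePred p] :
    (Measure.pi ν).real {ω | p ω} = ∑ ω with p ω, ∏ t, (ν t).real {ω t} := by
  rw [← Finset.coe_filter_univ, ← sum_measureReal_singleton]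
  simp only [measureReal_def, Measure.pi_singleton, ENNReal.toReal_prod]

variable [MeasurableSingletonClass X] {w s : X → ℝ}

theorem measureReal_measureOfWeights_singleton {x : X} (hw : 0 ≤ w x) :
    (measureOfWeights w).real {x} = w x := by
  rw [measureOfWeights, measureReal_withDensity_ofReal_singleton _ _ hw, count_real_singleton,
    mul_one]

section Finite

variable [Finite X]

theorem ae_measureOfWeights_iff {p : X → Prop} :
    (∀ᵐ x ∂measureOfWeights w, p x) ↔ ∀ x, 0 < w x → p x := by
  rw [measureOfWeights, ae_withDensity_iff (measurable_of_finite _), Measure.ae_count_iff]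
  simp only [ne_eq, ENNReal.ofReal_eq_zero, not_le]

instance isFiniteMeasure_measureOfWeights : IsFiniteMeasure (measureOfWeights w) :=
  isFiniteMeasure_withDensity_ofReal (Integrable.of_finite (μ := Measure.count)).2

instance isFiniteMeasure_importanceMeasure (ν : Measure X) [IsFiniteMeasure ν] :
    IsFiniteMeasure (importanceMeasure ν s) :=
  isFiniteMeasure_withDensity_ofReal (Integrable.of_finite (μ := ν)).2

end Finite

variable [Fintype X]

theorem integral_measureOfWeights (hw : ∀ x, 0 ≤ w x) (g : X → ℝ) :
    ∫ x, g x ∂measureOfWeights w = ∑ x, w x * g x := by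
  simp only [integral_fintype Integrable.of_finite, measureReal_measureOfWeights_singleton (hw _),
    smul_eq_mul]

theorem measureReal_importanceMeasure_measureOfWeights_singleton (hw : ∀ x, 0 ≤ w x)
    (hs : ∀ x, 0 ≤ s x) (x : X) :
    (importanceMeasure (measureOfWeights w) s).real {x} = s x * w x / ∑ y, w y * s y := by
  have hdensity : 0 ≤ s x / ∑ y, w y * s y :=
    div_nonneg (hs x) (Finset.sum_nonneg fun y _ => mul_nonneg (hw y) (hs y))
  simp only [importanceMeasure, integral_measureOfWeights hw]
  rw [measureReal_withDensity_ofReal_singleton _ (fun y => s y / ∑ z, w z * s z) hdensity,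
    measureReal_measureOfWeights_singleton (hw x), div_mul_eq_mul_div]

end FiniteSpace

/-- concentration for importance sampling: with `a ≥ 2(S−1)/ε²`
independent samples from `q`, the weighted empirical estimate of `f̄` is within
`ε·f̄` of `f̄` with probability at least `1/2`. -/
theorem importance_sampling_concentration {X : Type*} [Fintype X]
    (μ : X → ℝ) (hμ0 : ∀ x, 0 ≤ μ x) (hμ1 : ∑ x, μ x = 1)
    (f : X → ℝ) (hf0 : ∀ x, 0 ≤ f x)
    (hfbar : 0 < ∑ x, μ x * f x)
    (s : X → ℝ) (hs0 : ∀ x, 0 < s x)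
    (hs : ∀ x, 0 < μ x → f x / (∑ y, μ y * f y) ≤ s x)
    (ε : ℝ) (hε : 0 < ε) (a : ℕ) (ha1 : 1 ≤ a)
    (ha : 2 * ((∑ y, μ y * s y) - 1) / ε ^ 2 ≤ (a : ℝ)) :
    -- the probability, over `a` i.i.d. draws from `q(x) = s(x)·μ(x)/S`, of deviating
    -- by at least `ε·f̄` is at most `1/2`
    (∑ ω ∈ Finset.univ.filter (fun ω : Fin a → X =>
        ε * (∑ y, μ y * f y) ≤
          |(∑ y, μ y * f y) -
            ∑ t : Fin a, ((∑ y, μ y * s y) / ((a : ℝ) * s (ω t))) * f (ω t)|),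
      ∏ t : Fin a, s (ω t) * μ (ω t) / (∑ y, μ y * s y)) ≤ 1 / 2 := by
  let : MeasurableSpace X := ⊤
  have hbound : IsSensitivityBound (measureOfWeights μ) f s := by
    simpa only [IsSensitivityBound, ae_measureOfWeights_iff, integral_measureOfWeights hμ0] using hs
  have hgeneral := importance_sampling_concentration_general (μ := measureOfWeights μ)
    (.of_forall hf0) (hfbar.trans_eq (integral_measureOfWeights hμ0 f).symm) .of_finite hbound hε
    ha1 (by rwa [integral_measureOfWeights hμ0])
  simpa only [measureReal_pi_setOf_eq_sum_prod, integral_measureOfWeights hμ0,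
    measureReal_importanceMeasure_measureOfWeights_singleton hμ0 fun x => (hs0 x).le] using hgeneral
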